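/- In the coordinate system Λ ⊕ H for L, writing elements as (λ; α, β), let Ψ be the set of roots of the form r = (λ; 1, θ(−3 − |λ|²)/6 + β), where λ ∈ Λ and β ∈ ½ℤ is chosen with 2β + 1 ≡ |λ|² (mod 2) so that the last entry lies in ℰ. Then Ψ is a connected set of roots. -/

import Mathlib

noncomputable section

open ComplexConjugate

namespace Bimonster

/-- The primitive cube root of unity `ω = e^{2πi/3}`. -/
def ω : ℂ := Complex.exp (2 * (Real.pi : ℂ) * Complex.I / 3)

/-- `θ = ω - ω̄ = √-3`. -/
def θ : ℂ := ω - conj ω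

/-- `ξ = e^{-πi/6}`. -/
def ξ : ℂ := Complex.exp (-((Real.pi : ℂ) * Complex.I) / 6)

/-- Membership in the ring of Eisenstein integers `ℰ = ℤ[ω] ⊆ ℂ`. -/
def EisP (z : ℂ) : Prop := ∃ a b : ℤ, z = (a : ℂ) + (b : ℂ) * ω

/-- The units of the ring of Eisenstein integers. -/
def EisUnit (z : ℂ) : Prop :=
  z = 1 ∨ z = -1 ∨ z = ω ∨ z = -ω ∨ z = ω ^ 2 ∨ z = -ω ^ 2

/-- A generator matrix of the ternary Golay code `𝒞₁₂ ⊆ 𝔽₃¹²`. -/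
def golay : Fin 6 → Fin 12 → ℤ :=
  ![![1, 0, 0, 0, 0, 0, 0, 1, 1, 1, 1, 1],
    ![0, 1, 0, 0, 0, 0, -1, 0, 1, -1, -1, 1],
    ![0, 0, 1, 0, 0, 0, -1, 1, 0, 1, -1, -1],
    ![0, 0, 0, 1, 0, 0, -1, -1, 1, 0, 1, -1],
    ![0, 0, 0, 0, 1, 0, -1, -1, -1, 1, 0, 1],
    ![0, 0, 0, 0, 0, 1, -1, 1, -1, -1, 1, 0]]

/-- The complex Leech lattice `Λ ⊆ ℰ¹²`: vectors `(m + θc_i + 3z_i)` with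
`m ∈ {0, ±1}`, `(c_i)` in the ternary Golay code and `z_i ∈ ℰ` with
`Σ z_i ≡ m mod θ`. -/
def Leech : Set (Fin 12 → ℂ) :=
  {lam | ∃ (m : ℤ) (s : Fin 6 → ℤ) (za zb : Fin 12 → ℤ),
    (m = 0 ∨ m = 1 ∨ m = -1) ∧
    (∀ i, lam i = (m : ℂ) + θ * ((∑ j, golay j i * s j : ℤ) : ℂ) +
        3 * ((za i : ℂ) + (zb i : ℂ) * ω)) ∧
    ∃ a b : ℤ, (∑ i, ((za i : ℂ) + (zb i : ℂ) * ω)) - (m : ℂ) = θ * ((a : ℂ) + (b : ℂ) * ω)}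

/-- The underlying 14-dimensional complex vector space of `L = Λ ⊕ H`. -/
abbrev V : Type := Fin 14 → ℂ

/-- The Hermitian form of `L = Λ ⊕ H`: `⟨u,v⟩ = -(1/3)Σ ū_i v_i` on the twelve Leech
coordinates, and the hyperbolic cell with Gram matrix `[[0, θ̄], [θ, 0]]` on the last
two coordinates.  It is conjugate-linear in the first variable. -/
def herm (u v : V) : ℂ :=
  -(1 / 3) *
      (∑ i : Fin 12, conj (u (Fin.castLE (by norm_num) i)) * v (Fin.castLE (by norm_num) i)) +
    conj (u 12) * conj θ * v 13 + conj (u 13) * θ * v 12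

/-- The norm `⟨λ,λ⟩ = -(1/3)Σ |λ_i|²` of a vector of the complex Leech lattice. -/
def normL (lam : Fin 12 → ℂ) : ℂ := -(1 / 3) * ∑ i, conj (lam i) * lam i

/-- Assemble a vector `(λ; x, y)` of `Λ ⊕ H` from its Leech part and its two
hyperbolic coordinates. -/
def glue (lam : Fin 12 → ℂ) (x y : ℂ) : V := fun i =>
  if h : (i : ℕ) < 12 then lam ⟨(i : ℕ), h⟩ else if (i : ℕ) = 12 then x else y

/-- The lattice `L = Λ ⊕ H` as a subset of `ℂ¹⁴`. -/
def Lset : Set V :=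
  {v | (fun i : Fin 12 => v (Fin.castLE (by norm_num) i)) ∈ Leech ∧
    EisP (v 12) ∧ EisP (v 13)}

/-- A root of `L`: a primitive lattice vector of norm `-3`. -/
def IsRoot (r : V) : Prop :=
  r ∈ Lset ∧ herm r r = -3 ∧
    ∀ α : ℂ, EisP α → ∀ y ∈ Lset, r = α • y → EisUnit α

/-- The `μ`-reflection in a vector `r`: `v ↦ v − (1−μ)·r·⟨r,v⟩/|r|²`. -/
def reflMap (μ : ℂ) (r v : V) : V := v - ((1 - μ) * herm r v / herm r r) • r

/-- The automorphism group of the lattice `L`. -/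
def AutL : Subgroup (V ≃ₗ[ℂ] V) where
  carrier := {g | (∀ v : V, v ∈ Lset ↔ g v ∈ Lset) ∧ ∀ u v : V, herm (g u) (g v) = herm u v}
  one_mem' := ⟨fun _ => Iff.rfl, fun _ _ => rfl⟩
  mul_mem' := by
    rintro f g ⟨hf1, hf2⟩ ⟨hg1, hg2⟩
    refine ⟨fun v => ?_, fun u v => ?_⟩
    · exact (hg1 v).trans (hf1 (g v))
    · exact (hf2 (g u) (g v)).trans (hg2 u v)
  inv_mem' := by
    rintro g ⟨hg1, hg2⟩
    refine ⟨fun v => ?_, fun u v => ?_⟩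
    · have h := hg1 (g.symm v)
      have hv : g (g.symm v) = v := g.apply_symm_apply v
      rw [hv] at h
      exact h.symm
    · have h := hg2 (g.symm u) (g.symm v)
      have hu : g (g.symm u) = u := g.apply_symm_apply u
      have hv : g (g.symm v) = v := g.apply_symm_apply v
      rw [hu, hv] at h
      exact h.symm

/-- The set of elements of `Aut(L)` acting as the `ω`-reflection in some root in `S`. -/
def ReflAutos (S : Set V) : Set (V ≃ₗ[ℂ] V) :=
  {g | g ∈ AutL ∧ ∃ r ∈ S, ∀ v, g v = reflMap ω r v}

/-- The reflection group `R(L)` of `L`. -/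
def RL : Subgroup (V ≃ₗ[ℂ] V) := Subgroup.closure (ReflAutos {r | IsRoot r})

/-- Two roots are adjacent when `|⟨a,b⟩| = √3`. -/
def Adj (a b : V) : Prop := ‖herm a b‖ = Real.sqrt 3

/-- A set of roots is connected if its adjacency graph is connected. -/
def ConnectedSet (Φ : Set V) : Prop :=
  ∀ a ∈ Φ, ∀ b ∈ Φ, Relation.ReflTransGen (fun x y => x ∈ Φ ∧ y ∈ Φ ∧ Adj x y) a b

/-- `Rad Φ` is the radical of a set `Φ` of roots: the closure of `Φ` under reflecting
members of the set in each other (and identification of unit multiples). -/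
inductive Rad (Φ : Set V) : V → Prop
  | base {r : V} : r ∈ Φ → Rad Φ r
  | refl {a b : V} : Rad Φ a → Rad Φ b → Rad Φ (reflMap ω a b)
  | inv {a b : V} : Rad Φ a → Rad Φ b → Rad Φ (reflMap (conj ω) a b)
  | unit {u : ℂ} {r : V} : EisUnit u → Rad Φ r → Rad Φ (u • r)

/-- The set `Ψ` of vectors `r = (λ; 1, θ(−3 − |λ|²)/6 + β)` with `λ ∈ Λ` and
`β ∈ ½ℤ` satisfying `2β + 1 ≡ |λ|² (mod 2)` (so that the last entry lies in `ℰ`). -/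
def PsiForm : Set V :=
  {r | ∃ (lam : Fin 12 → ℂ) (β : ℝ) (k j t : ℤ),
    lam ∈ Leech ∧ 2 * β = (k : ℝ) ∧ normL lam = (j : ℂ) ∧
    2 * β + 1 - (j : ℝ) = 2 * (t : ℝ) ∧
    r = glue lam 1 (θ * (-3 - normL lam) / 6 + (β : ℂ))}

/-!
`Ψ` consists of the norm `-3` vectors `(l; 1, y)` of `L`. For a minimal vector `u` of `Λ` and an
integer `ε`, the Heisenberg translation taking `(l; 1, y)` to `(l + u; 1, y + θ + ε + ⟨l, u⟩ / θ)`
preserves `Ψ`, and the two vectors have inner product `-ε θ`, so they are adjacent when `ε = ±1`.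
The minimal vectors generate `Λ`, hence such steps reach every Leech part. Over a fixed Leech part,
two members of `Ψ` differ by an integer in the last coordinate, and the commutator of the
translations by two suitable minimal vectors is the shift of that coordinate by `1`.
-/

section CubeRoot

lemma isPrimitiveRoot_omega : IsPrimitiveRoot ω 3 :=
  Complex.isPrimitiveRoot_exp 3 (by norm_num)

lemma one_add_omega_add_omega_sq : 1 + ω + ω ^ 2 = 0 := by
  simpa [Finset.sum_range_succ] using isPrimitiveRoot_omega.geom_sum_eq_zero (by norm_num)

lemma conj_omega_mul_omega : conj ω * ω = 1 := by
  simp [Complex.conj_mul', isPrimitiveRoot_omega.norm'_eq_one (by norm_num)]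

lemma conj_omega : conj ω = -1 - ω := by
  linear_combination (-1 - ω) * conj_omega_mul_omega + conj ω * one_add_omega_add_omega_sq

lemma theta_eq : θ = 1 + 2 * ω := by
  rw [θ, conj_omega]
  ring

lemma theta_sq : θ ^ 2 = -3 := by
  rw [theta_eq]
  linear_combination 4 * one_add_omega_add_omega_sq

lemma conj_theta : conj θ = -θ := by
  simp [θ]

lemma theta_ne_zero : θ ≠ 0 := fun h ↦ by
  simpa [h] using theta_sq

lemma norm_theta : ‖θ‖ = √3 := by
  have h : ‖θ‖ ^ 2 = 3 := by rw [← norm_pow, theta_sq]; simp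
  rw [← h, Real.sqrt_sq (norm_nonneg θ)]

end CubeRoot

section Eisenstein

/-- The ring `ℰ = ℤ[ω]` of Eisenstein integers as a subring of `ℂ`, which makes the closure
lemmas for subrings available; its membership predicate is `EisP`. -/
def eisenstein : Subring ℂ where
  carrier := {z | EisP z}
  zero_mem' := ⟨0, 0, by simp⟩
  one_mem' := ⟨1, 0, by simp⟩
  add_mem' := by
    rintro _ _ ⟨a, b, rfl⟩ ⟨c, d, rfl⟩
    exact ⟨a + c, b + d, by push_cast; ring⟩
  mul_mem' := by
    rintro _ _ ⟨a, b, rfl⟩ ⟨c, d, rfl⟩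
    refine ⟨a * c - b * d, a * d + b * c - b * d, ?_⟩
    push_cast
    linear_combination (b * d : ℂ) * one_add_omega_add_omega_sq
  neg_mem' := by
    rintro _ ⟨a, b, rfl⟩
    exact ⟨-a, -b, by push_cast; ring⟩

lemma omega_mem_eisenstein : ω ∈ eisenstein := ⟨0, 1, by simp⟩

lemma theta_mem_eisenstein : θ ∈ eisenstein := ⟨1, 2, by rw [theta_eq]; simp⟩

lemma conj_int_add_int_mul_omega (a b : ℤ) : conj (a + b * ω : ℂ) = a + b * (-1 - ω) := by
  simp [conj_omega]

lemma conj_mem_eisenstein {z : ℂ} (hz : z ∈ eisenstein) : conj z ∈ eisenstein := by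
  obtain ⟨a, b, rfl⟩ := hz
  refine ⟨a - b, -b, ?_⟩
  rw [conj_int_add_int_mul_omega]
  push_cast
  ring

lemma exists_intCast_eq_of_conj_eq_self {z : ℂ} (hz : z ∈ eisenstein) (hconj : conj z = z) :
    ∃ n : ℤ, z = n := by
  obtain ⟨a, b, rfl⟩ := hz
  rw [conj_int_add_int_mul_omega] at hconj
  have hb : θ * b = 0 := by rw [theta_eq]; linear_combination -hconj
  exact ⟨a, by simp [(mul_eq_zero.mp hb).resolve_left theta_ne_zero]⟩

lemma exists_eq_three_mul_intCast_of_conj_eq_self {z : ℂ} (hz : z / θ ∈ eisenstein)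
    (hconj : conj z = z) : ∃ n : ℤ, z = 3 * n := by
  have hdiv : conj (z / θ) = -(z / θ) := by rw [map_div₀, hconj, conj_theta, div_neg]
  obtain ⟨a, b, hab⟩ := hz
  rw [hab, conj_int_add_int_mul_omega] at hdiv
  refine ⟨-a, ?_⟩
  have hz' : z = θ * (a + b * ω) := by rw [← hab, mul_div_cancel₀ _ theta_ne_zero]
  rw [hz']
  push_cast
  linear_combination (-θ * ω) * hdiv - θ * a * theta_eq + a * theta_sq

lemma conj_mul_self_int_add_int_mul_omega (a b : ℤ) :
    conj (a + b * ω : ℂ) * (a + b * ω) = (a ^ 2 - a * b + b ^ 2 : ℤ) := by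
  rw [conj_int_add_int_mul_omega]
  push_cast
  linear_combination -(b : ℂ) ^ 2 * one_add_omega_add_omega_sq

lemma eisUnit_of_sq_sub_mul_add_sq_eq_one {a b : ℤ} (h : a ^ 2 - a * b + b ^ 2 = 1) :
    EisUnit (a + b * ω) := by
  have hω : ω ^ 2 = -1 - ω := by linear_combination one_add_omega_add_omega_sq
  obtain ⟨hb₁, hb₂⟩ := abs_le.mp (show |b| ≤ 1 by
    rw [← sq_le_one_iff_abs_le_one]; nlinarith [sq_nonneg (2 * a - b)])
  obtain ⟨ha₁, ha₂⟩ := abs_le.mp (show |a| ≤ 1 by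
    rw [← sq_le_one_iff_abs_le_one]; nlinarith [sq_nonneg (2 * b - a)])
  rw [EisUnit, hω]
  interval_cases a <;> interval_cases b <;> first | omega | (push_cast; ring_nf; simp)

lemma eisUnit_of_mul_eq_one {z w : ℂ} (hz : EisP z) (hw : EisP w) (h : z * w = 1) :
    EisUnit z := by
  obtain ⟨a, b, rfl⟩ := hz
  obtain ⟨c, d, rfl⟩ := hw
  apply eisUnit_of_sq_sub_mul_add_sq_eq_one
  have hnorm : (a ^ 2 - a * b + b ^ 2) * (c ^ 2 - c * d + d ^ 2) = 1 := by
    have := congrArg (fun x ↦ conj x * x) h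
    simp only [map_mul, map_one, mul_one, mul_mul_mul_comm,
      conj_mul_self_int_add_int_mul_omega] at this
    exact_mod_cast this
  exact Int.eq_one_of_mul_eq_one_right (by nlinarith [sq_nonneg (2 * a - b)]) hnorm

end Eisenstein

section LeechForm

/-- The Hermitian form `⟨u, v⟩ = -(1/3) Σ ū_i v_i` on the Leech coordinates, as a sesquilinear
map that is conjugate-linear in the first variable; its norm is `normL`. -/
def leechForm : (Fin 12 → ℂ) →ₗ⋆[ℂ] (Fin 12 → ℂ) →ₗ[ℂ] ℂ :=
  LinearMap.mk₂'ₛₗ _ _ (fun u v ↦ -(1 / 3) * ∑ i, conj (u i) * v i)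
    (fun u v w ↦ by simp only [Pi.add_apply, map_add, add_mul, Finset.sum_add_distrib, mul_add])
    (fun a u v ↦ by
      simp only [Pi.smul_apply, smul_eq_mul, map_mul, mul_assoc, ← Finset.mul_sum]
      ring)
    (fun u v w ↦ by simp only [Pi.add_apply, mul_add, Finset.sum_add_distrib])
    (fun a u v ↦ by
      simp only [Pi.smul_apply, smul_eq_mul, RingHom.id_apply, Finset.mul_sum]
      exact Finset.sum_congr rfl fun i _ ↦ by ring)

lemma leechForm_apply (u v : Fin 12 → ℂ) :
    leechForm u v = -(1 / 3) * ∑ i, conj (u i) * v i := rfl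

lemma normL_eq_leechForm (u : Fin 12 → ℂ) : normL u = leechForm u u := rfl

lemma conj_leechForm (u v : Fin 12 → ℂ) : conj (leechForm u v) = leechForm v u := by
  simp [leechForm_apply, mul_comm, Complex.conj_ofNat]

end LeechForm

section GolayCode

/-- The integral span of the rows of `golay`; its reduction modulo `3` is the ternary Golay code
`𝒞₁₂`. -/
def golayCode : Submodule ℤ (Fin 12 → ℤ) := Submodule.span ℤ (Set.range golay)

lemma golay_mem_golayCode (j : Fin 6) : golay j ∈ golayCode :=
  Submodule.subset_span ⟨j, rfl⟩

lemma mem_golayCode {c : Fin 12 → ℤ} :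
    c ∈ golayCode ↔ ∃ s : Fin 6 → ℤ, ∀ i, c i = ∑ j, golay j i * s j := by
  simp only [golayCode, Submodule.mem_span_range_iff_exists_fun, funext_iff, Finset.sum_apply,
    Pi.smul_apply, smul_eq_mul, mul_comm, eq_comm]

lemma three_dvd_sum_of_mem_golayCode {c : Fin 12 → ℤ} (hc : c ∈ golayCode) :
    3 ∣ ∑ i, c i := by
  induction hc using Submodule.span_induction with
  | mem _ h =>
    obtain ⟨j, rfl⟩ := h
    revert j
    decide
  | zero => simp
  | add _ _ _ _ hx hy => simpa only [Pi.add_apply, Finset.sum_add_distrib] using dvd_add hx hy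
  | smul a _ _ hx =>
    simpa only [Pi.smul_apply, smul_eq_mul, ← Finset.mul_sum] using hx.mul_left a

lemma three_dvd_dotProduct_of_mem_golayCode {c d : Fin 12 → ℤ} (hc : c ∈ golayCode)
    (hd : d ∈ golayCode) : 3 ∣ c ⬝ᵥ d := by
  induction hc, hd using Submodule.span_induction₂ with
  | mem_mem _ _ hx hy =>
    obtain ⟨j, rfl⟩ := hx
    obtain ⟨k, rfl⟩ := hy
    revert j k
    decide
  | zero_left => simp
  | zero_right => simp
  | add_left _ _ _ _ _ _ hx hy => simpa only [add_dotProduct] using dvd_add hx hy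
  | add_right _ _ _ _ _ _ hx hy => simpa only [dotProduct_add] using dvd_add hx hy
  | smul_left a _ _ _ _ h => simpa only [smul_dotProduct, smul_eq_mul] using h.mul_left a
  | smul_right a _ _ _ _ h => simpa only [dotProduct_smul, smul_eq_mul] using h.mul_left a

end GolayCode

section LeechLattice

/-- The vector `(m + θ c_i + 3 z_i)_i` attached to the data `(m, c, z)`. -/
def leechVec : ℤ × (Fin 12 → ℤ) × (Fin 12 → ℂ) →+ (Fin 12 → ℂ) where
  toFun p i := p.1 + θ * p.2.1 i + 3 * p.2.2 i
  map_zero' := by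
    ext i
    simp
  map_add' p q := by
    ext i
    simp only [Prod.fst_add, Prod.snd_add, Pi.add_apply, Int.cast_add]
    ring

lemma leechVec_apply (m : ℤ) (c : Fin 12 → ℤ) (z : Fin 12 → ℂ) (i : Fin 12) :
    leechVec (m, c, z) i = m + θ * c i + 3 * z i := rfl

/-- The data `(m, c, z)` defining vectors of the complex Leech lattice. Unlike in `Leech`, the
integer `m` is not restricted to `{0, ±1}`, which makes the data a group. The congruence
`Σ z_i ≡ m mod θ` is expressed by integrality of a quotient. -/
def leechData : AddSubgroup (ℤ × (Fin 12 → ℤ) × (Fin 12 → ℂ)) where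
  carrier := {p | p.2.1 ∈ golayCode ∧ (∀ i, p.2.2 i ∈ eisenstein) ∧
    (∑ i, p.2.2 i - p.1) / θ ∈ eisenstein}
  zero_mem' := by simp [zero_mem]
  add_mem' := by
    rintro p q ⟨hpc, hpz, hps⟩ ⟨hqc, hqz, hqs⟩
    refine ⟨add_mem hpc hqc, fun i ↦ add_mem (hpz i) (hqz i), ?_⟩
    convert add_mem hps hqs using 1
    simp only [Prod.fst_add, Prod.snd_add, Pi.add_apply, Finset.sum_add_distrib, Int.cast_add]
    ring
  neg_mem' := by
    rintro p ⟨hpc, hpz, hps⟩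
    refine ⟨neg_mem hpc, fun i ↦ neg_mem (hpz i), ?_⟩
    convert neg_mem hps using 1
    simp only [Prod.fst_neg, Prod.snd_neg, Pi.neg_apply, Finset.sum_neg_distrib, Int.cast_neg]
    ring

/-- The complex Leech lattice `Leech` as an additive subgroup of `ℂ¹²`. -/
def leechLattice : AddSubgroup (Fin 12 → ℂ) := leechData.map leechVec

lemma leechVec_mem_leechLattice {p : ℤ × (Fin 12 → ℤ) × (Fin 12 → ℂ)} (hp : p ∈ leechData) :
    leechVec p ∈ leechLattice :=
  AddSubgroup.mem_map_of_mem leechVec hp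

lemma leech_subset_leechLattice : Leech ⊆ leechLattice := by
  rintro l ⟨m, s, za, zb, -, hl, a, b, hsum⟩
  refine ⟨(m, fun i ↦ ∑ j, golay j i * s j, fun i ↦ za i + zb i * ω), ⟨?_, ?_, ?_⟩, ?_⟩
  · exact mem_golayCode.mpr ⟨s, fun _ ↦ rfl⟩
  · exact fun i ↦ ⟨za i, zb i, rfl⟩
  · exact ⟨a, b, by rw [hsum, mul_div_cancel_left₀ _ theta_ne_zero]⟩
  · exact (funext hl).symm

lemma leechVec_eq_of_add_three_mul (m q : ℤ) (c : Fin 12 → ℤ) (z : Fin 12 → ℂ) :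
    leechVec (m + 3 * q, c, z) = leechVec (m, c, fun i ↦ z i + q) := by
  ext i
  simp only [leechVec_apply]
  push_cast
  ring

lemma mem_leechData_of_add_three_mul {m q : ℤ} {c : Fin 12 → ℤ} {z : Fin 12 → ℂ}
    (h : (m + 3 * q, c, z) ∈ leechData) : (m, c, fun i ↦ z i + q) ∈ leechData := by
  obtain ⟨hc, hz, hsum⟩ := h
  refine ⟨hc, fun i ↦ add_mem (hz i) (intCast_mem _ q), ?_⟩
  convert sub_mem hsum (mul_mem (intCast_mem _ (5 * q)) theta_mem_eisenstein) using 1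
  simp only [Finset.sum_add_distrib, Finset.sum_const, Finset.card_univ, Fintype.card_fin]
  field_simp [theta_ne_zero]
  push_cast
  linear_combination 5 * (q : ℂ) * theta_sq

lemma leechLattice_subset_leech : (leechLattice : Set (Fin 12 → ℂ)) ⊆ Leech := by
  rintro _ ⟨⟨m, c, z⟩, hp, rfl⟩
  obtain ⟨q, m₀, hm₀, rfl⟩ : ∃ q m₀ : ℤ, (m₀ = 0 ∨ m₀ = 1 ∨ m₀ = -1) ∧ m = m₀ + 3 * q :=
    ⟨(m + 1) / 3, (m + 1) % 3 - 1, by omega, by omega⟩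
  rw [leechVec_eq_of_add_three_mul]
  obtain ⟨hc, hz, a, b, hsum⟩ := mem_leechData_of_add_three_mul hp
  choose za zb hzab using hz
  obtain ⟨s, hs⟩ := mem_golayCode.mp hc
  refine ⟨m₀, s, za, zb, hm₀, fun i ↦ ?_, a, b, ?_⟩
  · rw [← hs, ← hzab, leechVec_apply]
  · simp only [← hsum, ← hzab]
    exact (mul_div_cancel₀ _ theta_ne_zero).symm

lemma mem_leechLattice {l : Fin 12 → ℂ} : l ∈ leechLattice ↔ l ∈ Leech :=
  ⟨fun h ↦ leechLattice_subset_leech h, fun h ↦ leech_subset_leechLattice h⟩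

lemma leechForm_leechVec (m m' : ℤ) (c c' : Fin 12 → ℤ) (z z' : Fin 12 → ℂ) :
    leechForm (leechVec (m, c, z)) (leechVec (m', c', z')) =
      -(4 * m * m' + ((c ⬝ᵥ c' : ℤ) : ℂ)
        + θ / 3 * (m * ((∑ i, c' i : ℤ) : ℂ) - m' * ((∑ i, c i : ℤ) : ℂ))
        + (m * ∑ i, z' i + m' * conj (∑ i, z i))
        + θ * (∑ i, conj (z i) * c' i - ∑ i, c i * z' i)
        + 3 * ∑ i, conj (z i) * z' i) := by
  have hconst : (4 * m * m' : ℂ) = 1 / 3 * ∑ _i : Fin 12, (m * m' : ℂ) := by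
    simp only [Finset.sum_const, Finset.card_univ, Fintype.card_fin, nsmul_eq_mul, Nat.cast_ofNat]
    ring
  rw [leechForm_apply, hconst]
  simp only [dotProduct, map_sum, Int.cast_sum, Int.cast_mul, Finset.mul_sum,
    ← Finset.sum_add_distrib, ← Finset.sum_sub_distrib, ← Finset.sum_neg_distrib]
  refine Finset.sum_congr rfl fun i _ ↦ ?_
  simp only [leechVec_apply, map_add, map_mul, map_intCast, conj_theta, Complex.conj_ofNat]
  linear_combination (c i * c' i / 3 : ℂ) * theta_sq

lemma leechForm_div_theta_mem_eisenstein {u v : Fin 12 → ℂ} (hu : u ∈ leechLattice)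
    (hv : v ∈ leechLattice) : leechForm u v / θ ∈ eisenstein := by
  obtain ⟨⟨m, c, z⟩, ⟨hc, hz, hsum⟩, rfl⟩ := hu
  obtain ⟨⟨m', c', z'⟩, ⟨hc', hz', hsum'⟩, rfl⟩ := hv
  obtain ⟨p, hp⟩ := three_dvd_sum_of_mem_golayCode hc
  obtain ⟨p', hp'⟩ := three_dvd_sum_of_mem_golayCode hc'
  obtain ⟨q, hq⟩ := three_dvd_dotProduct_of_mem_golayCode hc hc'
  have hmixed : ∑ i, conj (z i) * c' i - ∑ i, c i * z' i ∈ eisenstein :=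
    sub_mem (sum_mem fun i _ ↦ mul_mem (conj_mem_eisenstein (hz i)) (intCast_mem _ _))
      (sum_mem fun i _ ↦ mul_mem (intCast_mem _ _) (hz' i))
  have hzz' : ∑ i, conj (z i) * z' i ∈ eisenstein :=
    sum_mem fun i _ ↦ mul_mem (conj_mem_eisenstein (hz i)) (hz' i)
  rw [leechForm_leechVec, hp, hp', hq]
  convert_to θ * (2 * m * m' + q + ∑ i, conj (z i) * z' i : ℂ) - (m * p' - m' * p)
    - m * ((∑ i, z' i - m') / θ) + m' * conj ((∑ i, z i - m) / θ)
    - (∑ i, conj (z i) * c' i - ∑ i, c i * z' i) ∈ eisenstein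
  · simp only [map_div₀, map_sub, conj_theta, map_intCast]
    field_simp [theta_ne_zero]
    push_cast
    linear_combination (-3 * (2 * m * m' + q + ∑ i, conj (z i) * z' i : ℂ)) * theta_sq
  · have hint (n : ℤ) : (n : ℂ) ∈ eisenstein := intCast_mem _ n
    have hmm' : (2 * m * m' + q : ℂ) ∈ eisenstein := by exact_mod_cast hint (2 * m * m' + q)
    have hmp : (m * p' - m' * p : ℂ) ∈ eisenstein := by exact_mod_cast hint (m * p' - m' * p)
    exact sub_mem (add_mem (sub_mem (sub_mem (mul_mem theta_mem_eisenstein (add_mem hmm' hzz'))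
      hmp) (mul_mem (hint m) hsum')) (mul_mem (hint m') (conj_mem_eisenstein hsum))) hmixed

lemma exists_normL_eq_three_mul_intCast {l : Fin 12 → ℂ} (hl : l ∈ leechLattice) :
    ∃ n : ℤ, normL l = 3 * n :=
  exists_eq_three_mul_intCast_of_conj_eq_self (leechForm_div_theta_mem_eisenstein hl hl)
    (conj_leechForm l l)

end LeechLattice

section MinimalVectors

/-- The minimal vectors of the complex Leech lattice, encoded as its vectors of norm `-6`. -/
def minimalVectors : Set (Fin 12 → ℂ) := {u | u ∈ leechLattice ∧ leechForm u u = -6}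

lemma neg_mem_minimalVectors {u : Fin 12 → ℂ} (hu : u ∈ minimalVectors) :
    -u ∈ minimalVectors :=
  ⟨neg_mem hu.1, by simpa using hu.2⟩

lemma single_apply_mem_eisenstein {z : ℂ} (hz : z ∈ eisenstein) (i j : Fin 12) :
    (Pi.single i z : Fin 12 → ℂ) j ∈ eisenstein := by
  rw [Pi.single_apply]
  split_ifs
  exacts [hz, zero_mem _]

lemma leechVec_golay_mem_minimalVectors (j : Fin 6) :
    leechVec (0, golay j, 0) ∈ minimalVectors := by
  have hweight : golay j ⬝ᵥ golay j = 6 := by revert j; decide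
  have hdata : (0, golay j, 0) ∈ leechData :=
    ⟨golay_mem_golayCode j, fun _ ↦ zero_mem _, by simp [zero_mem]⟩
  exact ⟨leechVec_mem_leechLattice hdata, by simp [leechForm_leechVec, hweight]⟩

lemma leechVec_single_sub_single_mem_minimalVectors {z : ℂ} (hz : z ∈ eisenstein)
    (hunit : conj z * z = 1) {i : Fin 12} (hi : i ≠ 0) :
    leechVec (0, 0, Pi.single i z - Pi.single 0 z) ∈ minimalVectors := by
  have hdata : (0, 0, Pi.single i z - Pi.single 0 z) ∈ leechData :=
    ⟨zero_mem _, fun j ↦ sub_mem (single_apply_mem_eisenstein hz i j)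
      (single_apply_mem_eisenstein hz 0 j), by simp [zero_mem]⟩
  refine ⟨leechVec_mem_leechLattice hdata, ?_⟩
  have hnorm : ∑ j, conj ((Pi.single i z - Pi.single 0 z : Fin 12 → ℂ) j) *
      (Pi.single i z - Pi.single 0 z : Fin 12 → ℂ) j = 2 := by
    simp only [Pi.sub_apply, Pi.single_apply, map_sub, apply_ite conj, map_zero, mul_sub, mul_ite,
      sub_mul, ite_mul, hunit, zero_mul, mul_zero, Finset.sum_sub_distrib, Finset.sum_ite_eq',
      Finset.mem_univ, ↓reduceIte, hi, sub_zero, hi.symm, zero_sub, sub_neg_eq_add]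
    norm_num
  rw [leechForm_leechVec, hnorm]
  simp only [Int.cast_zero, mul_zero, dotProduct_zero, add_zero, Pi.zero_apply,
    Finset.sum_const_zero, sub_self, Pi.sub_apply, Finset.sum_sub_distrib, Finset.sum_pi_single',
    Finset.mem_univ, ↓reduceIte, map_zero, map_sub, zero_mul, zero_add]
  norm_num

lemma leechVec_one_mem_minimalVectors {z w : ℂ} (hz : z ∈ eisenstein) (hw : w ∈ eisenstein)
    (hsum : (z + w - 1) / θ ∈ eisenstein)
    (hnorm : conj z + conj w + z + w + 3 * (conj z * z + conj w * w) = 2) :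
    leechVec (1, 0, Pi.single 0 z + Pi.single 1 w) ∈ minimalVectors := by
  have hdata : (1, 0, Pi.single 0 z + Pi.single 1 w) ∈ leechData :=
    ⟨zero_mem _, fun j ↦ add_mem (single_apply_mem_eisenstein hz 0 j)
      (single_apply_mem_eisenstein hw 1 j), by simpa [Finset.sum_add_distrib] using hsum⟩
  refine ⟨leechVec_mem_leechLattice hdata, ?_⟩
  have hzw : ∑ j, conj ((Pi.single 0 z + Pi.single 1 w : Fin 12 → ℂ) j) *
      (Pi.single 0 z + Pi.single 1 w : Fin 12 → ℂ) j = conj z * z + conj w * w := by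
    simp [mul_add, add_mul, Finset.sum_add_distrib, Pi.single_apply, apply_ite conj]
  rw [leechForm_leechVec, hzw]
  simp only [Int.cast_one, mul_one, dotProduct_zero, Int.cast_zero, add_zero, Pi.zero_apply,
    Finset.sum_const_zero, mul_zero, sub_self, Pi.add_apply, Finset.sum_add_distrib,
    Finset.sum_pi_single', Finset.mem_univ, ↓reduceIte, one_mul, map_add, zero_mul]
  linear_combination -hnorm

lemma leechVec_one_single_omega_mem_minimalVectors :
    leechVec (1, 0, Pi.single 0 ω) ∈ minimalVectors := by
  have hsum : (ω + 0 - 1) / θ = 1 + ω := by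
    rw [div_eq_iff theta_ne_zero, theta_eq]
    linear_combination -2 * one_add_omega_add_omega_sq
  have h := leechVec_one_mem_minimalVectors omega_mem_eisenstein (zero_mem _)
    (by rw [hsum]; exact add_mem (one_mem _) omega_mem_eisenstein)
    (by
      rw [conj_omega_mul_omega, conj_omega, map_zero]
      ring)
  simpa using h

lemma leechVec_one_single_conj_omega_mem_minimalVectors :
    leechVec (1, 0, Pi.single 0 (conj ω)) ∈ minimalVectors := by
  have hsum : (conj ω + 0 - 1) / θ = ω := by
    rw [div_eq_iff theta_ne_zero, theta_eq, conj_omega]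
    linear_combination -2 * one_add_omega_add_omega_sq
  have h := leechVec_one_mem_minimalVectors (conj_mem_eisenstein omega_mem_eisenstein)
    (zero_mem _) (by rw [hsum]; exact omega_mem_eisenstein)
    (by
      rw [Complex.conj_conj, mul_comm ω, conj_omega_mul_omega, conj_omega, map_zero]
      ring)
  simpa using h

lemma leechVec_one_single_neg_one_mem_minimalVectors :
    leechVec (1, 0, Pi.single 0 (-1) + Pi.single 1 (-1)) ∈ minimalVectors := by
  have hsum : (-1 + -1 - 1) / θ = θ := by
    rw [div_eq_iff theta_ne_zero]
    linear_combination -theta_sq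
  exact leechVec_one_mem_minimalVectors (neg_mem (one_mem _)) (neg_mem (one_mem _))
    (by rw [hsum]; exact theta_mem_eisenstein) (by
      rw [map_neg, map_one]
      norm_num)

end MinimalVectors

section Generation

lemma leechVec_single_sub_single_mem_closure {z : ℂ} (hz : z ∈ eisenstein) (i : Fin 12) :
    leechVec (0, 0, Pi.single i z - Pi.single 0 z) ∈ AddSubgroup.closure minimalVectors := by
  rcases eq_or_ne i 0 with rfl | hi
  · simpa only [sub_self] using (map_zero leechVec).symm ▸ zero_mem _
  obtain ⟨a, b, rfl⟩ := hz
  have hsplit : leechVec (0, 0, Pi.single i (a + b * ω) - Pi.single 0 (a + b * ω)) =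
      a • leechVec (0, 0, Pi.single i 1 - Pi.single 0 1) +
        b • leechVec (0, 0, Pi.single i ω - Pi.single 0 ω) := by
    ext j
    simp only [Pi.add_apply, Pi.smul_apply, leechVec_apply, Pi.sub_apply, Pi.single_apply,
      Pi.zero_apply, Int.cast_zero]
    simp only [zsmul_eq_mul]
    split_ifs <;> ring
  rw [hsplit]
  exact add_mem
    (zsmul_mem (AddSubgroup.subset_closure
      (leechVec_single_sub_single_mem_minimalVectors (one_mem _) (by simp) hi)) a)
    (zsmul_mem (AddSubgroup.subset_closure
      (leechVec_single_sub_single_mem_minimalVectors omega_mem_eisenstein conj_omega_mul_omega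
        hi)) b)

lemma leechVec_single_theta_mem_closure :
    leechVec (0, 0, Pi.single 0 θ) ∈ AddSubgroup.closure minimalVectors := by
  have hdiff : leechVec (0, 0, Pi.single 0 θ) =
      leechVec (1, 0, Pi.single 0 ω) - leechVec (1, 0, Pi.single 0 (conj ω)) := by
    simp [← map_sub, ← Pi.single_sub, θ]
  rw [hdiff]
  exact sub_mem (AddSubgroup.subset_closure leechVec_one_single_omega_mem_minimalVectors)
    (AddSubgroup.subset_closure leechVec_one_single_conj_omega_mem_minimalVectors)

lemma leechVec_single_theta_mul_omega_mem_closure :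
    leechVec (0, 0, Pi.single 0 (θ * ω)) ∈ AddSubgroup.closure minimalVectors := by
  have hθω : θ * ω = -1 + -1 - ω := by
    rw [theta_eq]
    linear_combination 2 * one_add_omega_add_omega_sq
  have hdiff : leechVec (0, 0, Pi.single 0 (θ * ω)) =
      leechVec (1, 0, Pi.single 0 (-1) + Pi.single 1 (-1)) +
        leechVec (0, 0, Pi.single 1 1 - Pi.single 0 1) - leechVec (1, 0, Pi.single 0 ω) := by
    simp only [← map_sub, ← map_add, hθω, Pi.single_sub, Pi.single_add, Pi.single_neg,
      Prod.mk_sub_mk, Prod.mk_add_mk]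
    congr 3
    abel
  rw [hdiff]
  exact sub_mem
    (add_mem (AddSubgroup.subset_closure leechVec_one_single_neg_one_mem_minimalVectors)
      (leechVec_single_sub_single_mem_closure (one_mem _) 1))
    (AddSubgroup.subset_closure leechVec_one_single_omega_mem_minimalVectors)

lemma leechVec_single_mem_closure {z : ℂ} (hz : z / θ ∈ eisenstein) :
    leechVec (0, 0, Pi.single 0 z) ∈ AddSubgroup.closure minimalVectors := by
  obtain ⟨a, b, hab⟩ := hz
  have hsplit : leechVec (0, 0, Pi.single 0 z) =
      a • leechVec (0, 0, Pi.single 0 θ) + b • leechVec (0, 0, Pi.single 0 (θ * ω)) := by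
    rw [(div_eq_iff theta_ne_zero).mp hab]
    ext j
    simp only [Pi.add_apply, Pi.smul_apply, leechVec_apply, Pi.single_apply, Pi.zero_apply,
      Int.cast_zero]
    simp only [zsmul_eq_mul]
    split_ifs <;> ring
  rw [hsplit]
  exact add_mem (zsmul_mem leechVec_single_theta_mem_closure a)
    (zsmul_mem leechVec_single_theta_mul_omega_mem_closure b)

lemma leechVec_zero_zero_mem_closure {z : Fin 12 → ℂ} (hz : ∀ i, z i ∈ eisenstein)
    (hsum : (∑ i, z i) / θ ∈ eisenstein) :
    leechVec (0, 0, z) ∈ AddSubgroup.closure minimalVectors := by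
  have hsplit : leechVec (0, 0, z) =
      ∑ i, leechVec (0, 0, Pi.single i (z i) - Pi.single 0 (z i)) +
        leechVec (0, 0, Pi.single 0 (∑ i, z i)) := by
    ext j
    simp only [leechVec_apply, Int.cast_zero, Pi.zero_apply, mul_zero, add_zero, zero_add,
      Pi.add_apply, Finset.sum_apply, Pi.sub_apply, Pi.single_apply, ← Finset.mul_sum,
      Finset.sum_sub_distrib, Finset.sum_ite_eq, Finset.mem_univ, ↓reduceIte,
      Finset.sum_ite_irrel, Finset.sum_const_zero]
    split_ifs <;> ring
  rw [hsplit]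
  exact add_mem (sum_mem fun i _ ↦ leechVec_single_sub_single_mem_closure (hz i) i)
    (leechVec_single_mem_closure hsum)

lemma leechVec_codeword_mem_closure {c : Fin 12 → ℤ} (hc : c ∈ golayCode) :
    leechVec (0, c, 0) ∈ AddSubgroup.closure minimalVectors := by
  induction hc using Submodule.span_induction with
  | mem _ h =>
    obtain ⟨j, rfl⟩ := h
    exact AddSubgroup.subset_closure (leechVec_golay_mem_minimalVectors j)
  | zero => exact (map_zero leechVec).symm ▸ zero_mem _
  | add c d _ _ hc hd => simpa [← map_add] using add_mem hc hd
  | smul a c _ hc =>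
    simpa only [← map_zsmul, Prod.smul_mk, smul_zero] using zsmul_mem hc a

theorem leechLattice_le_closure_minimalVectors :
    leechLattice ≤ AddSubgroup.closure minimalVectors := by
  rintro _ ⟨⟨m, c, z⟩, ⟨hc, hz, hsum⟩, rfl⟩
  have hsplit : leechVec (m, c, z) = m • leechVec (1, 0, Pi.single 0 ω) + leechVec (0, c, 0) +
      leechVec (0, 0, z - m • Pi.single 0 ω) := by
    simp only [← map_zsmul, ← map_add, Prod.smul_mk, Prod.mk_add_mk, smul_zero, zsmul_one,
      Int.cast_id, add_zero, zero_add, add_sub_cancel]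
  rw [hsplit]
  refine add_mem (add_mem (zsmul_mem (AddSubgroup.subset_closure
    leechVec_one_single_omega_mem_minimalVectors) m) (leechVec_codeword_mem_closure hc))
    (leechVec_zero_zero_mem_closure (fun i ↦ sub_mem (hz i) (zsmul_mem
      (single_apply_mem_eisenstein omega_mem_eisenstein 0 i) m)) ?_)
  convert add_mem hsum (mul_mem (intCast_mem _ (-m))
    (add_mem (one_mem _) omega_mem_eisenstein)) using 1
  have hsub : ∑ i, (z - m • Pi.single 0 ω : Fin 12 → ℂ) i = ∑ i, z i - m * ω := by
    simp [Finset.sum_sub_distrib, ← Finset.mul_sum]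
  rw [hsub]
  push_cast
  field_simp [theta_ne_zero]
  rw [theta_eq]
  linear_combination 2 * (m : ℂ) * one_add_omega_add_omega_sq

lemma exists_minimalVectors_commutator_eq_theta :
    ∃ a ∈ minimalVectors, ∃ b ∈ minimalVectors, leechForm a b - leechForm b a = θ := by
  refine ⟨_, leechVec_golay_mem_minimalVectors 0, _,
    leechVec_single_sub_single_mem_minimalVectors omega_mem_eisenstein conj_omega_mul_omega
      (one_ne_zero : (1 : Fin 12) ≠ 0), ?_⟩
  have hform : leechForm (leechVec (0, golay 0, 0))
      (leechVec (0, 0, Pi.single 1 ω - Pi.single 0 ω)) = -θ * ω := by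
    simp [leechForm_leechVec, mul_sub, Finset.sum_sub_distrib, Pi.single_apply, golay]
  rw [← conj_leechForm (leechVec (0, golay 0, 0)), hform, map_mul, map_neg, conj_theta,
    conj_omega, theta_eq]
  ring

end Generation

section Roots

@[simp]
lemma glue_castLE (l : Fin 12 → ℂ) (x y : ℂ) (i : Fin 12) :
    glue l x y (Fin.castLE (by norm_num) i) = l i := by
  simp [glue]

@[simp]
lemma glue_twelve (l : Fin 12 → ℂ) (x y : ℂ) : glue l x y 12 = x := by
  simp [glue]

@[simp]
lemma glue_thirteen (l : Fin 12 → ℂ) (x y : ℂ) : glue l x y 13 = y := by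
  simp [glue]

lemma glue_inj {l l' : Fin 12 → ℂ} {x x' y y' : ℂ} :
    glue l x y = glue l' x' y' ↔ l = l' ∧ x = x' ∧ y = y' := by
  refine ⟨fun h ↦ ⟨funext fun i ↦ ?_, ?_, ?_⟩, by rintro ⟨rfl, rfl, rfl⟩; rfl⟩
  · simpa using congrFun h (Fin.castLE (by norm_num) i)
  · simpa using congrFun h 12
  · simpa using congrFun h 13

lemma herm_glue_one (l l' : Fin 12 → ℂ) (y y' : ℂ) :
    herm (glue l 1 y) (glue l' 1 y') = leechForm l l' + θ * (conj y - y') := by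
  simp only [herm, glue_castLE, glue_twelve, glue_thirteen, leechForm_apply, map_one, conj_theta]
  ring

lemma conj_herm (u v : V) : conj (herm u v) = herm v u := by
  simp only [herm, map_add, map_mul, map_neg, map_div₀, map_sum, map_one, Complex.conj_conj,
    Complex.conj_ofNat, mul_comm (conj (v _))]
  ring

lemma Adj.symm {u v : V} (h : Adj u v) : Adj v u := by
  rw [Adj, ← conj_herm, Complex.norm_conj]
  exact h

lemma exists_eq_glue_one_of_mem_psiForm {r : V} (hr : r ∈ PsiForm) :
    ∃ l y, r = glue l 1 y := by
  obtain ⟨l, β, -, -, -, -, -, -, -, rfl⟩ := hr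
  exact ⟨l, _, rfl⟩

lemma mem_of_glue_one_mem_psiForm {l : Fin 12 → ℂ} {y : ℂ} (h : glue l 1 y ∈ PsiForm) :
    l ∈ leechLattice ∧ y ∈ eisenstein ∧ herm (glue l 1 y) (glue l 1 y) = -3 := by
  obtain ⟨l', β, k, j, t, hl, -, hj, ht, h⟩ := h
  obtain ⟨rfl, -, rfl⟩ := glue_inj.mp h
  rw [← mem_leechLattice] at hl
  obtain ⟨n, hn⟩ := exists_normL_eq_three_mul_intCast hl
  have hβ : (β : ℂ) = (2 * t - 1 + 3 * n) / 2 := by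
    have ht' : (2 * β + 1 - j : ℂ) = 2 * t := by exact_mod_cast ht
    linear_combination ht' / 2 + (hn - hj) / 2
  refine ⟨hl, ⟨t + n - 1, -1 - n, ?_⟩, ?_⟩
  · rw [hβ, hn, theta_eq]
    push_cast
    ring
  · rw [herm_glue_one, ← normL_eq_leechForm, hn]
    simp only [map_add, map_mul, map_div₀, map_sub, map_neg, conj_theta, Complex.conj_ofNat,
      Complex.conj_ofReal, map_intCast]
    linear_combination (1 + n) * theta_sq

lemma glue_one_mem_psiForm {l : Fin 12 → ℂ} {y : ℂ} (hl : l ∈ leechLattice)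
    (hy : y ∈ eisenstein) (hnorm : herm (glue l 1 y) (glue l 1 y) = -3) :
    glue l 1 y ∈ PsiForm := by
  obtain ⟨n, hn⟩ := exists_normL_eq_three_mul_intCast hl
  obtain ⟨a, b, rfl⟩ := hy
  have hb : b = -1 - n := by
    rw [herm_glue_one, ← normL_eq_leechForm, hn, conj_int_add_int_mul_omega] at hnorm
    have hb' : (b : ℂ) = -1 - n := by
      rw [theta_eq] at hnorm
      linear_combination hnorm / 3 + 4 / 3 * (b : ℂ) * one_add_omega_add_omega_sq
    exact_mod_cast hb'
  subst hb
  refine ⟨l, a - (-1 - n) / 2, 2 * a - (-1 - n), 3 * n, a + 1 - n, mem_leechLattice.mp hl, ?_, ?_,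
    ?_, ?_⟩
  · push_cast; ring
  · rw [hn]; push_cast; ring
  · push_cast; ring
  · rw [hn, theta_eq]
    congr 1
    push_cast
    ring

theorem isRoot_of_mem_psiForm {r : V} (hr : r ∈ PsiForm) : IsRoot r := by
  obtain ⟨l, y, rfl⟩ := exists_eq_glue_one_of_mem_psiForm hr
  obtain ⟨hl, hy, hnorm⟩ := mem_of_glue_one_mem_psiForm hr
  refine ⟨⟨?_, ?_, ?_⟩, hnorm, fun α hα v hv hαv ↦ ?_⟩
  · simpa using mem_leechLattice.mp hl
  · rw [glue_twelve]
    exact one_mem eisenstein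
  · rw [glue_thirteen]
    exact hy
  · have hone : α * v 12 = 1 := by simpa using (congrFun hαv 12).symm
    exact eisUnit_of_mul_eq_one hα hv.2.1 hone

end Roots

section Connectedness

/-- Two vectors are joined by a path in the adjacency graph on `Ψ`. -/
def PsiReachable : V → V → Prop :=
  Relation.ReflTransGen fun r s ↦ r ∈ PsiForm ∧ s ∈ PsiForm ∧ Adj r s

lemma PsiReachable.refl (r : V) : PsiReachable r r := Relation.ReflTransGen.refl

lemma PsiReachable.symm {r s : V} (h : PsiReachable r s) : PsiReachable s r := by
  have : Std.Symm fun r s : V ↦ r ∈ PsiForm ∧ s ∈ PsiForm ∧ Adj r s :=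
    ⟨fun _ _ ⟨hr, hs, hadj⟩ ↦ ⟨hs, hr, hadj.symm⟩⟩
  exact Relation.ReflTransGen.stdSymm.symm _ _ h

-- The translation by `u` in the Heisenberg group that fixes the null vector `(0; 0, 1)`.
lemma glue_add_mem_psiForm {l u : Fin 12 → ℂ} {y : ℂ} (h : glue l 1 y ∈ PsiForm)
    (hu : u ∈ minimalVectors) (ε : ℤ) :
    glue (l + u) 1 (y + θ + ε + leechForm l u / θ) ∈ PsiForm := by
  obtain ⟨hl, hy, hnorm⟩ := mem_of_glue_one_mem_psiForm h
  refine glue_one_mem_psiForm (add_mem hl hu.1) (add_mem (add_mem (add_mem hy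
    theta_mem_eisenstein) (intCast_mem _ ε)) (leechForm_div_theta_mem_eisenstein hl hu.1)) ?_
  rw [herm_glue_one] at hnorm ⊢
  simp only [map_add, LinearMap.add_apply, map_div₀, conj_theta, map_intCast, conj_leechForm, hu.2]
  field_simp [theta_ne_zero]
  linear_combination hnorm - 2 * theta_sq

lemma herm_glue_add {l u : Fin 12 → ℂ} {y : ℂ} (h : glue l 1 y ∈ PsiForm) (ε : ℤ) :
    herm (glue l 1 y) (glue (l + u) 1 (y + θ + ε + leechForm l u / θ)) = -(ε * θ) := by
  obtain ⟨-, -, hnorm⟩ := mem_of_glue_one_mem_psiForm h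
  rw [herm_glue_one] at hnorm ⊢
  rw [map_add]
  field_simp [theta_ne_zero]
  linear_combination hnorm - theta_sq

lemma psiReachable_glue_add {l u : Fin 12 → ℂ} {y : ℂ} (h : glue l 1 y ∈ PsiForm)
    (hu : u ∈ minimalVectors) {ε : ℤ} (hε : |ε| = 1) :
    PsiReachable (glue l 1 y) (glue (l + u) 1 (y + θ + ε + leechForm l u / θ)) := by
  refine .single ⟨h, glue_add_mem_psiForm h hu ε, ?_⟩
  rw [Adj, herm_glue_add h, norm_neg, norm_mul, norm_theta, Complex.norm_intCast, ← Int.cast_abs,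
    hε, Int.cast_one, one_mul]

-- The commutator of the translations by `a` and `b` is central, so it moves only the last entry.
lemma psiReachable_glue_add_commutator {l a b : Fin 12 → ℂ} {y : ℂ} (h : glue l 1 y ∈ PsiForm)
    (ha : a ∈ minimalVectors) (hb : b ∈ minimalVectors) :
    glue l 1 (y + (leechForm a b - leechForm b a) / θ) ∈ PsiForm ∧
      PsiReachable (glue l 1 y) (glue l 1 (y + (leechForm a b - leechForm b a) / θ)) := by
  have h₁ := glue_add_mem_psiForm h ha 1
  have h₂ := glue_add_mem_psiForm h₁ hb (-1)
  have h₃ := glue_add_mem_psiForm h₂ (neg_mem_minimalVectors ha) 1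
  have h₄ := glue_add_mem_psiForm h₃ (neg_mem_minimalVectors hb) (-1)
  have hpath := (((psiReachable_glue_add h ha abs_one).trans
    (psiReachable_glue_add h₁ hb (by rw [abs_neg, abs_one]))).trans
    (psiReachable_glue_add h₂ (neg_mem_minimalVectors ha) abs_one)).trans
    (psiReachable_glue_add h₃ (neg_mem_minimalVectors hb) (by rw [abs_neg, abs_one]))
  rw [show l + a + b + -a + -b = l by abel] at h₄ hpath
  have hend : y + (leechForm a b - leechForm b a) / θ = y + θ + (1 : ℤ) + leechForm l a / θ + θ +
      (-1 : ℤ) + leechForm (l + a) b / θ + θ + (1 : ℤ) + leechForm (l + a + b) (-a) / θ + θ +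
      (-1 : ℤ) + leechForm (l + a + b + -a) (-b) / θ := by
    simp only [map_add, map_neg, LinearMap.add_apply, LinearMap.neg_apply, ha.2, hb.2]
    field_simp [theta_ne_zero]
    push_cast
    linear_combination -4 * theta_sq
  rw [hend]
  exact ⟨h₄, hpath⟩

lemma psiReachable_glue_add_one {l : Fin 12 → ℂ} {y : ℂ} (h : glue l 1 y ∈ PsiForm) :
    glue l 1 (y + 1) ∈ PsiForm ∧ PsiReachable (glue l 1 y) (glue l 1 (y + 1)) := by
  obtain ⟨a, ha, b, hb, hab⟩ := exists_minimalVectors_commutator_eq_theta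
  simpa [hab, theta_ne_zero] using psiReachable_glue_add_commutator h ha hb

lemma psiReachable_glue_add_natCast {l : Fin 12 → ℂ} {y : ℂ} (h : glue l 1 y ∈ PsiForm) (n : ℕ) :
    glue l 1 (y + n) ∈ PsiForm ∧ PsiReachable (glue l 1 y) (glue l 1 (y + n)) := by
  induction n with
  | zero => simpa using And.intro h (PsiReachable.refl _)
  | succ n ih =>
    obtain ⟨hmem, hpath⟩ := psiReachable_glue_add_one ih.1
    rw [Nat.cast_succ, ← add_assoc]
    exact ⟨hmem, ih.2.trans hpath⟩

lemma psiReachable_of_same_leech_part {l : Fin 12 → ℂ} {y y' : ℂ} (h : glue l 1 y ∈ PsiForm)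
    (h' : glue l 1 y' ∈ PsiForm) : PsiReachable (glue l 1 y) (glue l 1 y') := by
  obtain ⟨-, hy, hnorm⟩ := mem_of_glue_one_mem_psiForm h
  obtain ⟨-, hy', hnorm'⟩ := mem_of_glue_one_mem_psiForm h'
  have hreal : conj (y' - y) = y' - y := by
    rw [herm_glue_one] at hnorm hnorm'
    apply mul_left_cancel₀ theta_ne_zero
    rw [map_sub]
    linear_combination hnorm' - hnorm
  obtain ⟨n, hn⟩ := exists_intCast_eq_of_conj_eq_self (sub_mem hy' hy) hreal
  obtain ⟨k, rfl | rfl⟩ := n.eq_nat_or_neg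
  · obtain rfl : y' = y + k := by simpa [sub_eq_iff_eq_add'] using hn
    exact (psiReachable_glue_add_natCast h k).2
  · obtain rfl : y = y' + k := by push_cast at hn; linear_combination -hn
    exact (psiReachable_glue_add_natCast h' k).2.symm

lemma exists_psiReachable_glue_add {l v : Fin 12 → ℂ} {y : ℂ} (h : glue l 1 y ∈ PsiForm)
    (hv : v ∈ AddSubgroup.closure minimalVectors) :
    ∃ y', glue (l + v) 1 y' ∈ PsiForm ∧ PsiReachable (glue l 1 y) (glue (l + v) 1 y') := by
  induction hv using AddSubgroup.closure_induction_right with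
  | zero => exact ⟨y, by simpa using h, by simpa using PsiReachable.refl _⟩
  | add_right v _ u hu ih =>
    obtain ⟨y', hmem, hpath⟩ := ih
    rw [← add_assoc]
    exact ⟨_, glue_add_mem_psiForm hmem hu 1, hpath.trans (psiReachable_glue_add hmem hu abs_one)⟩
  | add_neg_cancel v _ u hu ih =>
    obtain ⟨y', hmem, hpath⟩ := ih
    have hu' := neg_mem_minimalVectors hu
    rw [← add_assoc]
    exact ⟨_, glue_add_mem_psiForm hmem hu' 1,
      hpath.trans (psiReachable_glue_add hmem hu' abs_one)⟩

theorem connectedSet_psiForm : ConnectedSet PsiForm := by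
  intro r hr s hs
  obtain ⟨l, y, rfl⟩ := exists_eq_glue_one_of_mem_psiForm hr
  obtain ⟨l', y', rfl⟩ := exists_eq_glue_one_of_mem_psiForm hs
  have hdiff : l' - l ∈ leechLattice :=
    sub_mem (mem_of_glue_one_mem_psiForm hs).1 (mem_of_glue_one_mem_psiForm hr).1
  obtain ⟨y'', hmem, hpath⟩ :=
    exists_psiReachable_glue_add hr (leechLattice_le_closure_minimalVectors hdiff)
  rw [add_sub_cancel] at hmem hpath
  exact hpath.trans (psiReachable_of_same_leech_part hmem hs)

end Connectedness

/-- The vectors of `Ψ` are roots of `L = Λ ⊕ H`, and `Ψ` is a connected set. -/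
theorem stmt7 : (∀ r ∈ PsiForm, IsRoot r) ∧ ConnectedSet PsiForm :=
  ⟨fun _ hr ↦ isRoot_of_mem_psiForm hr, connectedSet_psiForm⟩

end Bimonster
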